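/- Let γ: ℝ/ℤ → ℝ³ be a continuous injective loop, let c ∈ ℝ³ be a point not in the image of γ, and let r > 0. Then the loop I_{c,r} ∘ γ is isotopic to the mirror image ρ ∘ γ of γ, where ρ: ℝ³ → ℝ³ is the reflection ρ(x₁,x₂,x₃) = (x₁,x₂,−x₃). (Consequently, if K is an E∘-minimizer of its isotopy class, then for any Möbius transformation T with T(K) ⊂ ℝ³, either T(K) or its mirror image belongs to the same isotopy class and is again an E∘-minimizer.) -/

import Mathlib

noncomputable section

/-- ℝ³ with the Euclidean norm. -/
abbrev E3 := EuclideanSpace ℝ (Fin 3)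

/-- Inversion in the sphere of center `c` and radius `r`. -/
def inv3 (c : E3) (r : ℝ) (x : E3) : E3 := c + (r ^ 2 / ‖x - c‖ ^ 2) • (x - c)

/-- The mirror reflection `ρ(x₁,x₂,x₃) = (x₁,x₂,−x₃)`. -/
def reflect3 (x : E3) : E3 := x - (2 * x 2) • EuclideanSpace.single (2 : Fin 3) (1 : ℝ)

/-- Two loops are isotopic if they can be joined by a continuous family of injective
loops. -/
def Isotopic (γ₀ γ₁ : ℝ → E3) : Prop :=
  ∃ H : ℝ → ℝ → E3, Continuous (Function.uncurry H) ∧ H 0 = γ₀ ∧ H 1 = γ₁ ∧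
    ∀ t ∈ Set.Icc (0:ℝ) 1,
      Function.Periodic (H t) 1 ∧ ∀ s s' : ℝ, H t s = H t s' → ∃ n : ℤ, s - s' = n

/-!
Moving the center and the radius of the sphere keeps the inverted loop within its isotopy class as
long as the center stays off the loop. The complement of a loop in dimension at least three is path
connected, so the center can be taken far away; keeping the sphere tangent to the mirror plane at
the origin while its radius grows to infinity then turns the inversion into the reflection.

For the connectedness (Borsuk's argument), suppose that the component of `c` in the complement of
the loop `e` is bounded. Approximating `e - c` by a smooth loop `g` and choosing a vector `v` off
the cone over `g`, which has measure zero, one deforms `e - c` through nonvanishing maps to the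
constant `v`; hence `e - c` extends to the whole space without zeros. Using that extension on the
component of `c` and `x - c` elsewhere gives a nonvanishing map that differs from `x - c` only on a
bounded set.

No such map exists: for a compactly supported `h` of class `C¹`, the integral of
`det (1 + t Dh) (b - ‖x + t h x‖²) ^ k` is a polynomial in `t`, and by the change of variables
formula it is constant for small `t`, hence takes the same value at `t = 0` and `t = 1`. If
`x + h x` had no zero, then `b - ‖x + h x‖²` would be bounded by some `a < b`, so that for `t = 1`
the integral would grow like `a ^ k`, slower than for `t = 0` as `k → ∞`.
-/

open MeasureTheory Set Metric Topology Polynomial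
open scoped Manifold

/-! ### Compactly supported perturbations of the identity -/

lemma integral_eval_eq_of_infinite {α : Type*} [MeasurableSpace α] {μ : Measure α}
    {P : α → ℝ[X]} {n : ℕ} (hdeg : ∀ x, (P x).natDegree ≤ n)
    (hint : ∀ t, Integrable (fun x => (P x).eval t) μ) {V : ℝ}
    (hV : {t | ∫ x, (P x).eval t ∂μ = V}.Infinite) (t : ℝ) : ∫ x, (P x).eval t ∂μ = V := by
  obtain ⟨s, hsV, hcard⟩ := hV.exists_subset_card_eq (n + 1)
  have lagrange : ∀ x, (P x).eval t = ∑ i ∈ s, (P x).eval i * (Lagrange.basis s id i).eval t := by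
    intro x
    have hlt : (P x).degree < s.card := by
      rw [hcard]
      exact (degree_le_of_natDegree_le (hdeg x)).trans_lt (by exact_mod_cast n.lt_succ_self)
    conv_lhs => rw [Lagrange.eq_interpolate (injOn_id _) hlt]
    simp only [Lagrange.interpolate_apply, id_eq, eval_finsetSum, eval_mul, eval_C]
  have hne : s.Nonempty := Finset.card_pos.1 (by omega)
  calc ∫ x, (P x).eval t ∂μ
      = ∑ i ∈ s, (∫ x, (P x).eval i ∂μ) * (Lagrange.basis s id i).eval t := by
        simp_rw [lagrange]
        rw [integral_finsetSum _ fun i _ => (hint i).mul_const _]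
        simp_rw [integral_mul_const]
    _ = V * (∑ i ∈ s, Lagrange.basis s id i).eval t := by
        rw [eval_finsetSum, Finset.mul_sum]
        exact Finset.sum_congr rfl fun i hi => by rw [hsV hi]
    _ = V := by rw [Lagrange.sum_basis (injOn_id _) hne, eval_one, mul_one]

lemma exists_polynomial_eval_eq_det_one_add_smul {R M : Type*} [CommRing R]
    [Nontrivial R] [AddCommGroup M] [Module R M] [Module.Free R M] [Module.Finite R M]
    (f : M →ₗ[R] M) :
    ∃ Q : R[X], Q.natDegree ≤ Module.finrank R M ∧ ∀ t, Q.eval t = LinearMap.det (1 + t • f) := by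
  classical
  let b := Module.finBasis R M
  let A := LinearMap.toMatrix b b f
  refine ⟨((X : R[X]) • A.map C + (1 : Matrix _ _ R).map C).det, ?_, fun t => ?_⟩
  · simpa using natDegree_det_X_add_C_le A 1
  · rw [← LinearMap.det_toMatrix b, ← coe_evalRingHom, RingHom.map_det]
    congr 1
    ext i j
    obtain rfl | hij := eq_or_ne i j <;>
      simp [A, LinearMap.toMatrix_one, mul_comm t, add_comm, *]

lemma bijective_id_add_of_contractingWith {E : Type*} [NormedAddCommGroup E] [CompleteSpace E]
    {K : NNReal} {f : E → E} (hf : ContractingWith K f) : Function.Bijective fun x => x + f x := by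
  refine (Function.bijective_iff_existsUnique _).2 fun y => ?_
  have hy : ContractingWith K fun x => y - f x :=
    ⟨hf.1, by simpa using (LipschitzWith.const y).sub hf.2⟩
  have hfix : ∀ x, x + f x = y ↔ Function.IsFixedPt (fun x => y - f x) x := fun x => by
    rw [Function.IsFixedPt, sub_eq_iff_eq_add, eq_comm]
  exact ⟨hy.fixedPoint, (hfix _).2 hy.fixedPoint_isFixedPt,
    fun x hx => hy.fixedPoint_unique ((hfix x).1 hx)⟩

lemma eventually_det_id_add_smul_pos {E : Type*} [NormedAddCommGroup E] [NormedSpace ℝ E]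
    (K : ℝ) :
    ∀ᶠ t in 𝓝 (0 : ℝ), ∀ A : E →L[ℝ] E, ‖A‖ ≤ K →
      0 < (ContinuousLinearMap.id ℝ E + t • A).det := by
  have hdet : ∀ᶠ B : E →L[ℝ] E in 𝓝 0, 0 < (ContinuousLinearMap.id ℝ E + B).det := by
    refine ContinuousAt.eventually_lt continuousAt_const ?_ (by simp [ContinuousLinearMap.det])
    exact (ContinuousLinearMap.continuous_det.comp (by fun_prop)).continuousAt
  obtain ⟨ε, hε, hball⟩ := Metric.eventually_nhds_iff.1 hdet
  have hsmall : ∀ᶠ t in 𝓝 (0 : ℝ), ‖t‖ * K < ε :=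
    ContinuousAt.eventually_lt (by fun_prop) continuousAt_const (by simpa)
  filter_upwards [hsmall] with t ht A hA
  refine hball ?_
  rw [dist_zero_right, norm_smul]
  exact (mul_le_mul_of_nonneg_left hA (norm_nonneg t)).trans_lt ht

lemma measureReal_le_eq_zero_of_integral_pow_eq {α : Type*} [MeasurableSpace α] {ν : Measure α}
    [IsFiniteMeasure ν] {d u v : α → ℝ} {a b : ℝ} (hd : Integrable d ν) (hu : ∀ᵐ x ∂ν, 0 ≤ u x)
    (hu_int : ∀ k : ℕ, Integrable (fun x => u x ^ k) ν) (hv : ∀ᵐ x ∂ν, |v x| ≤ a)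
    (heq : ∀ k : ℕ, ∫ x, d x * v x ^ k ∂ν = ∫ x, u x ^ k ∂ν)
    (ha : 0 ≤ a) (hab : a < b) : ν.real {x | b ≤ u x} = 0 := by
  have hb : 0 < b := ha.trans_lt hab
  have markov : ∀ k : ℕ, b ^ k * ν.real {x | b ≤ u x} ≤ ∫ x, u x ^ k ∂ν := fun k =>
    calc b ^ k * ν.real {x | b ≤ u x}
        ≤ b ^ k * ν.real {x | b ^ k ≤ u x ^ k} := by
          refine mul_le_mul_of_nonneg_left (measureReal_mono ?_) (pow_pos hb k).le
          exact fun x hx => pow_le_pow_left₀ hb.le hx k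
      _ ≤ ∫ x, u x ^ k ∂ν :=
          mul_meas_ge_le_integral_of_nonneg (hu.mono fun x hx => pow_nonneg hx k) (hu_int k) _
  have upper : ∀ k : ℕ, ∫ x, d x * v x ^ k ∂ν ≤ (∫ x, |d x| ∂ν) * a ^ k := by
    intro k
    rw [← integral_mul_const]
    refine (le_abs_self _).trans (norm_integral_le_of_norm_le (G := ℝ) (hd.abs.mul_const _) ?_)
    filter_upwards [hv] with x hx
    rw [norm_mul, norm_pow]
    exact mul_le_mul_of_nonneg_left (pow_le_pow_left₀ (norm_nonneg _) hx k) (norm_nonneg _)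
  have hle : ∀ k : ℕ, ν.real {x | b ≤ u x} ≤ (∫ x, |d x| ∂ν) * (a / b) ^ k := fun k => by
    rw [div_pow, ← mul_div_assoc, le_div_iff₀' (pow_pos hb k)]
    exact (markov k).trans ((heq k).symm.trans_le (upper k))
  have hlim : Filter.Tendsto (fun k : ℕ => (∫ x, |d x| ∂ν) * (a / b) ^ k) Filter.atTop (𝓝 0) := by
    simpa using (tendsto_pow_atTop_nhds_zero_of_lt_one (div_nonneg ha hb.le)
      ((div_lt_one hb).2 hab)).const_mul (∫ x, |d x| ∂ν)
  exact (ge_of_tendsto' hlim hle).antisymm measureReal_nonneg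

lemma setIntegral_det_mul_comp_id_add {E : Type*} [NormedAddCommGroup E] [NormedSpace ℝ E]
    [FiniteDimensional ℝ E] [MeasurableSpace E] [BorelSpace E] (μ : Measure E)
    [μ.IsAddHaarMeasure] {h : E → E} {S : Set E} (hS : MeasurableSet S)
    (hdiff : Differentiable ℝ h) (hsupp : ∀ x ∉ S, h x = 0)
    (hbij : Function.Bijective fun x => x + h x)
    (hdet : ∀ x, 0 ≤ (ContinuousLinearMap.id ℝ E + fderiv ℝ h x).det) (φ : E → ℝ) :
    ∫ x in S, (ContinuousLinearMap.id ℝ E + fderiv ℝ h x).det * φ (x + h x) ∂μ =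
      ∫ x in S, φ x ∂μ := by
  have himage : (fun x => x + h x) '' S = S := by
    have hcompl : (fun x => x + h x) '' Sᶜ = Sᶜ := by
      refine (image_congr fun x hx => ?_).trans (image_id _)
      rw [hsupp x hx, add_zero, id]
    rw [← compl_inj_iff, ← image_compl_eq hbij, hcompl]
  have hfderiv : ∀ x ∈ S, HasFDerivWithinAt (fun x => x + h x)
      (ContinuousLinearMap.id ℝ E + fderiv ℝ h x) S x := fun x _ =>
    ((hasFDerivAt_id x).add (hdiff x).hasFDerivAt).hasFDerivWithinAt
  have := integral_image_eq_integral_abs_det_fderiv_smul μ hS hfderiv hbij.1.injOn φ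
  simpa only [himage, abs_of_nonneg (hdet _), smul_eq_mul] using this.symm

section Surjectivity

variable {E : Type*} [NormedAddCommGroup E] [InnerProductSpace ℝ E] [FiniteDimensional ℝ E]

lemma exists_polynomial_eval_eq_det_mul_pow (A : E →L[ℝ] E) (x y : E) (b : ℝ) (k : ℕ) :
    ∃ P : ℝ[X], P.natDegree ≤ Module.finrank ℝ E + 2 * k ∧ ∀ t,
      P.eval t = (ContinuousLinearMap.id ℝ E + t • A).det * (b - ‖x + t • y‖ ^ 2) ^ k := by
  obtain ⟨Q, hdeg, hQ⟩ := exists_polynomial_eval_eq_det_one_add_smul (A : E →ₗ[ℝ] E)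
  refine ⟨Q * (C (b - ‖x‖ ^ 2) - C (2 * inner ℝ x y) * X - C (‖y‖ ^ 2) * X ^ 2) ^ k,
    natDegree_mul_le_of_le hdeg ?_, fun t => ?_⟩
  · rw [mul_comm 2 k]
    exact natDegree_pow_le_of_le k (by compute_degree)
  · have hnorm : ‖x + t • y‖ ^ 2 = ‖x‖ ^ 2 + 2 * inner ℝ x y * t + ‖y‖ ^ 2 * t ^ 2 := by
      rw [norm_add_sq_real, inner_smul_right, norm_smul, mul_pow, Real.norm_eq_abs, sq_abs]
      ring
    rw [eval_mul, hQ, hnorm, ← sub_sub, ← sub_sub]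
    simp only [eval_pow, eval_sub, eval_mul, eval_C, eval_X]
    rfl

section Measure

variable [MeasurableSpace E] [BorelSpace E] (μ : Measure E) [μ.IsAddHaarMeasure]

lemma setIntegral_det_mul_sub_sq_norm_pow {h : E → E} {S : Set E} (hS : IsCompact S)
    (hh : ContDiff ℝ 1 h) (hsupp : ∀ x ∉ S, h x = 0) (b : ℝ) (k : ℕ) :
    ∫ x in S, (ContinuousLinearMap.id ℝ E + fderiv ℝ h x).det * (b - ‖x + h x‖ ^ 2) ^ k ∂μ =
      ∫ x in S, (b - ‖x‖ ^ 2) ^ k ∂μ := by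
  choose P hdeg hP using fun x => exists_polynomial_eval_eq_det_mul_pow (fderiv ℝ h x) x (h x) b k
  have hfderiv : Continuous (fderiv ℝ h) := hh.continuous_fderiv one_ne_zero
  have hint : ∀ t, Integrable (fun x => (P x).eval t) (μ.restrict S) := fun t => by
    simp_rw [hP]
    have := hh.continuous
    refine ContinuousOn.integrableOn_compact hS (Continuous.continuousOn ?_)
    exact (ContinuousLinearMap.continuous_det.comp
      (continuous_const.add (hfderiv.const_smul t))).mul (by fun_prop)
  obtain ⟨K, hK⟩ := hh.lipschitzWith_of_hasCompactSupport (HasCompactSupport.intro hS hsupp)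
    one_ne_zero
  have hsmall : ∀ᶠ t in 𝓝 (0 : ℝ), ‖t‖₊ * K < 1 :=
    ContinuousAt.eventually_lt (by fun_prop) continuousAt_const (by simp)
  have hlocal : ∀ᶠ t in 𝓝 (0 : ℝ), ∫ x in S, (P x).eval t ∂μ = ∫ x in S, (b - ‖x‖ ^ 2) ^ k ∂μ := by
    filter_upwards [hsmall, eventually_det_id_add_smul_pos (E := E) K] with t ht hdet
    have hfd : ∀ x, fderiv ℝ (t • h) x = t • fderiv ℝ h x := fun x =>
      fderiv_const_smul (hh.differentiable one_ne_zero x) t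
    have := setIntegral_det_mul_comp_id_add μ (h := t • h) hS.measurableSet
      ((hh.differentiable one_ne_zero).const_smul t) (fun x hx => by simp [hsupp x hx])
      (bijective_id_add_of_contractingWith ⟨ht, (lipschitzWith_smul t).comp hK⟩)
      (fun x => hfd x ▸ (hdet _ (norm_fderiv_le_of_lipschitz ℝ hK)).le)
      fun y => (b - ‖y‖ ^ 2) ^ k
    simpa only [hP, hfd, Pi.smul_apply] using this
  simpa only [hP, one_smul] using
    integral_eval_eq_of_infinite hdeg hint (infinite_of_mem_nhds 0 hlocal) 1

lemma measure_closedBall_inter_eq_zero_of_lt_norm_add {h : E → E} {S : Set E} (hS : IsCompact S)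
    (hh : ContDiff ℝ 1 h) (hsupp : ∀ x ∉ S, h x = 0) {c m : ℝ} (hc : 0 ≤ c) (hcm : c < m)
    (hm : ∀ x ∈ S, m ≤ ‖x + h x‖) : μ (closedBall 0 c ∩ S) = 0 := by
  have hcont : Continuous fun x => x + h x := continuous_id.add hh.continuous
  obtain ⟨b, hmb, hb⟩ : ∃ b, m ^ 2 ≤ b ∧ ∀ x ∈ S, ‖x‖ ^ 2 ≤ b ∧ ‖x + h x‖ ^ 2 ≤ b := by
    obtain ⟨B, hB⟩ := hS.bddAbove_image
      (f := fun x => max (‖x‖ ^ 2) (‖x + h x‖ ^ 2)) (by fun_prop)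
    exact ⟨max (m ^ 2) B, le_max_left _ _, fun x hx =>
      max_le_iff.1 ((hB (mem_image_of_mem _ hx)).trans (le_max_right _ _))⟩
  have hdet : Continuous fun x => (ContinuousLinearMap.id ℝ E + fderiv ℝ h x).det :=
    ContinuousLinearMap.continuous_det.comp
      (continuous_const.add (hh.continuous_fderiv one_ne_zero))
  have := Fact.mk (hS.measure_lt_top (μ := μ))
  have hnull : (μ.restrict S).real {x | b - c ^ 2 ≤ b - ‖x‖ ^ 2} = 0 := by
    refine measureReal_le_eq_zero_of_integral_pow_eq (a := b - m ^ 2)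
      (v := fun x => b - ‖x + h x‖ ^ 2) (hdet.continuousOn.integrableOn_compact hS) ?_
      (fun k => ContinuousOn.integrableOn_compact hS (by fun_prop)) ?_
      (fun k => setIntegral_det_mul_sub_sq_norm_pow μ hS hh hsupp b k) (sub_nonneg.2 hmb) ?_
    · filter_upwards [ae_restrict_mem hS.measurableSet] with x hx
      exact sub_nonneg.2 (hb x hx).1
    · filter_upwards [ae_restrict_mem hS.measurableSet] with x hx
      rw [abs_of_nonneg (sub_nonneg.2 (hb x hx).2)]
      exact sub_le_sub_left (pow_le_pow_left₀ (hc.trans hcm.le) (hm x hx) 2) b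
    · exact sub_lt_sub_left (pow_lt_pow_left₀ hcm hc two_ne_zero) b
  have hball : {x : E | b - c ^ 2 ≤ b - ‖x‖ ^ 2} = closedBall 0 c := by
    ext x
    simp only [mem_ofPred_eq, sub_le_sub_iff_left, sq_le_sq₀ (norm_nonneg x) hc,
      mem_closedBall_zero_iff]
  rwa [hball, measureReal_restrict_apply isClosed_closedBall.measurableSet,
    measureReal_eq_zero_iff (measure_inter_lt_top_of_right_ne_top hS.measure_ne_top).ne] at hnull

end Measure

lemma exists_add_eq_zero_of_contDiff {h : E → E} (hh : ContDiff ℝ 1 h)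
    (hsupp : HasCompactSupport h) : ∃ x, x + h x = 0 := by
  by_contra! hne
  borelize E
  obtain ⟨r, hr⟩ := hsupp.isCompact.isBounded.subset_closedBall 0
  let S := closedBall (0 : E) (max r 1)
  have hS : IsCompact S := isCompact_closedBall 0 _
  have hS0 : S ∈ 𝓝 0 := closedBall_mem_nhds 0 (by positivity)
  have hsuppS : ∀ x ∉ S, h x = 0 := fun x hx => image_eq_zero_of_notMem_tsupport fun hx' =>
    hx (closedBall_subset_closedBall (le_max_left r 1) (hr hx'))
  obtain ⟨x₀, -, hx₀⟩ := hS.exists_isMinOn ⟨0, mem_of_mem_nhds hS0⟩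
    (continuous_id.add hh.continuous).norm.continuousOn
  have hm : 0 < ‖x₀ + h x₀‖ := norm_pos_iff.2 (hne x₀)
  have hnull := measure_closedBall_inter_eq_zero_of_lt_norm_add Measure.addHaar hS hh hsuppS
    (half_pos hm).le (half_lt_self hm) fun x hx => hx₀ hx
  exact (Measure.measure_pos_of_mem_nhds Measure.addHaar
    (Filter.inter_mem (closedBall_mem_nhds 0 (half_pos hm)) hS0)).ne' hnull

theorem surjective_of_hasCompactSupport_sub {G : E → E} (hG : Continuous G)
    (hsupp : HasCompactSupport fun x => G x - x) : Function.Surjective G := by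
  intro y
  by_contra! hy
  obtain ⟨h, hh, happrox, hsub⟩ := Continuous.exists_contDiff_approx (f := fun x => G x - x)
    (ε := fun x => ‖G x - y‖) 1 (by fun_prop) (by fun_prop) fun x =>
      norm_pos_iff.2 (sub_ne_zero.2 (hy x))
  obtain ⟨x, hx⟩ := exists_add_eq_zero_of_contDiff (h := h ∘ Homeomorph.addRight y)
    (hh.comp (contDiff_id.add contDiff_const)) ((hsupp.mono hsub).comp_homeomorph _)
  have hhx : h (x + y) = -x := eq_neg_of_add_eq_zero_right hx
  have hlt : ‖-x - (G (x + y) - (x + y))‖ < ‖G (x + y) - y‖ := by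
    simpa only [hhx, dist_eq_norm] using happrox (x + y)
  rw [← norm_neg] at hlt
  exact hlt.ne (congrArg norm (by abel))

end Surjectivity

/-! ### Complements of loops -/

lemma frontier_pathComponentIn_subset_compl {X : Type*} [TopologicalSpace X]
    [LocallyPathConnectedSpace X] {U : Set X} (hU : IsOpen U) (c : X) :
    frontier (pathComponentIn U c) ⊆ Uᶜ := by
  intro x hx hxU
  obtain ⟨y, hyx, hyc⟩ := mem_closure_iff_nhds.1 (frontier_subset_closure hx) _
    ((hU.pathComponentIn x).mem_nhds (mem_pathComponentIn_self hxU))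
  have hxc : x ∈ pathComponentIn U c := JoinedIn.trans hyc hyx.symm
  rw [(hU.pathComponentIn c).frontier_eq] at hx
  exact hx.2 hxc

lemma isPathConnected_compl_closedBall {E : Type*} [NormedAddCommGroup E] [NormedSpace ℝ E]
    (hE : 1 < Module.rank ℝ E) (x : E) {r : ℝ} (hr : 0 ≤ r) :
    IsPathConnected (closedBall x r)ᶜ := by
  have himage : (fun p : ℝ × E => x + p.1 • p.2) '' (Ioi r ×ˢ sphere 0 1) = (closedBall x r)ᶜ := by
    ext y
    simp only [mem_image, Prod.exists, mem_prod, mem_Ioi, mem_sphere_zero_iff_norm, mem_compl_iff,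
      mem_closedBall, not_le, dist_eq_norm]
    constructor
    · rintro ⟨s, u, ⟨hs, hu⟩, rfl⟩
      rwa [add_sub_cancel_left, norm_smul, hu, mul_one, Real.norm_of_nonneg (hr.trans hs.le)]
    · intro hy
      have hne : y - x ≠ 0 := norm_pos_iff.1 (hr.trans_lt hy)
      refine ⟨‖y - x‖, ‖y - x‖⁻¹ • (y - x), ⟨hy, norm_smul_inv_norm hne⟩, ?_⟩
      rw [smul_inv_smul₀ (norm_ne_zero_iff.2 hne), add_sub_cancel]
  rw [← himage]
  exact ((convex_Ioi r).isPathConnected nonempty_Ioi).prod (isPathConnected_sphere hE 0 zero_le_one)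
    |>.image (by fun_prop)

lemma isPathConnected_compl_of_not_isBounded {E : Type*} [NormedAddCommGroup E] [NormedSpace ℝ E]
    (hE : 1 < Module.rank ℝ E) {K : Set E} (hK : Bornology.IsBounded K)
    (hunbdd : ∀ c ∈ Kᶜ, ¬ Bornology.IsBounded (pathComponentIn Kᶜ c)) : IsPathConnected Kᶜ := by
  obtain ⟨r, hr, hKr⟩ := hK.subset_closedBall_lt 0 0
  have houter := isPathConnected_compl_closedBall hE 0 hr.le
  have hsub : (closedBall (0 : E) r)ᶜ ⊆ Kᶜ := compl_subset_compl.2 hKr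
  have hjoin : ∀ x ∈ Kᶜ, ∃ y ∈ (closedBall (0 : E) r)ᶜ, JoinedIn Kᶜ x y := fun x hx => by
    by_contra! hno
    exact hunbdd x hx (isBounded_closedBall.subset fun y hy => not_not.1 fun hyr => hno y hyr hy)
  refine isPathConnected_iff.2 ⟨houter.nonempty.mono hsub, fun x hx y hy => ?_⟩
  obtain ⟨x', hx', hxx'⟩ := hjoin x hx
  obtain ⟨y', hy', hyy'⟩ := hjoin y hy
  exact hxx'.trans (((houter.joinedIn x' hx' y' hy').mono hsub).trans hyy'.symm)

lemma not_isBounded_pathComponentIn_compl {E : Type*} [NormedAddCommGroup E]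
    [InnerProductSpace ℝ E] [FiniteDimensional ℝ E] {K : Set E} (hK : IsClosed K) {c : E}
    (hc : c ∉ K) {F : E → E} (hF : Continuous F) (hF0 : ∀ x, F x ≠ 0)
    (hFK : ∀ x ∈ K, F x = x - c) : ¬ Bornology.IsBounded (pathComponentIn Kᶜ c) := by
  classical
  intro hbdd
  let G := (pathComponentIn Kᶜ c).piecewise (fun x => F x + c) id
  have hG : Continuous G := by
    refine Continuous.piecewise (fun x hx => ?_) (by fun_prop) continuous_id
    have hxK := frontier_pathComponentIn_subset_compl hK.isOpen_compl c hx
    rw [hFK x (not_not.1 hxK), sub_add_cancel, id]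
  have hsupp : HasCompactSupport fun x => G x - x :=
    HasCompactSupport.intro hbdd.isCompact_closure fun x hx => by
      have hxc : x ∉ pathComponentIn Kᶜ c := fun hx' => hx (subset_closure hx')
      simp only [G, piecewise_eq_of_notMem _ _ _ hxc, id, sub_self]
  obtain ⟨x, hx⟩ := surjective_of_hasCompactSupport_sub hG hsupp c
  by_cases hxc : x ∈ pathComponentIn Kᶜ c
  · exact hF0 x (by simpa [G, hxc] using hx)
  · have hxc' : x = c := by simpa [G, hxc] using hx
    exact hxc (hxc'.symm ▸ mem_pathComponentIn_self hc)

/-- The map `f : X → E` extends along `e : X → Y` to a continuous map `Y → E` without zeros. For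
`e` a closed embedding in `E` and `f = e - c`, Borsuk's criterion relates this to the component of
`c` in the complement of the range of `e`. -/
def ExtendsNonvanishing {X Y E : Type*} [TopologicalSpace Y] [TopologicalSpace E] [Zero E]
    (e : X → Y) (f : X → E) : Prop :=
  ∃ F : Y → E, Continuous F ∧ (∀ y, F y ≠ 0) ∧ ∀ x, F (e x) = f x

lemma ExtendsNonvanishing.of_zero_notMem_segment {X Y E : Type*} [TopologicalSpace X]
    [TopologicalSpace Y] [NormalSpace Y] [NormedAddCommGroup E] [InnerProductSpace ℝ E]
    [FiniteDimensional ℝ E] {e : X → Y} (he : IsClosedEmbedding e) {f g : X → E}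
    (hf : Continuous f) (hseg : ∀ x, (0 : E) ∉ segment ℝ (f x) (g x))
    (hg : ExtendsNonvanishing e g) : ExtendsNonvanishing e f := by
  obtain ⟨G, hGcont, hG0, hGe⟩ := hg
  have := TietzeExtension.of_tvs ℝ (E := E)
  obtain ⟨F, hF⟩ := ContinuousMap.exists_extension he ⟨f, hf⟩
  have hFe : ∀ x, F (e x) = f x := fun x => congrArg (fun φ => φ x) hF
  let Z := {y | Wbtw ℝ (F y) 0 (G y)}
  have hZ : IsClosed Z := by
    simp only [Z, ← dist_add_dist_eq_iff]
    exact isClosed_eq (by fun_prop) (by fun_prop)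
  have hdisj : Disjoint (range e) Z := by
    rw [disjoint_left]
    rintro _ ⟨x, rfl⟩ hx
    exact hseg x (by simpa only [hFe, hGe, Z, mem_ofPred_eq, ← mem_segment_iff_wbtw] using hx)
  obtain ⟨τ, hτ0, hτ1, hτ⟩ := exists_continuous_zero_one_of_isClosed he.isClosed_range hZ hdisj
  refine ⟨fun y => AffineMap.lineMap (F y) (G y) (τ y), ?_, fun y hy => ?_, fun x => ?_⟩
  · simp only [AffineMap.lineMap_apply_module]
    fun_prop
  · have hyZ : y ∈ Z := ⟨τ y, hτ y, hy⟩
    exact hG0 y (by simpa only [hτ1 hyZ, Pi.one_apply, AffineMap.lineMap_apply_one] using hy)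
  · simp only [hτ0 (mem_range_self x), Pi.zero_apply, AffineMap.lineMap_apply_zero, hFe]

lemma zero_notMem_segment_of_dist_lt_norm {E : Type*} [NormedAddCommGroup E] [NormedSpace ℝ E]
    {x y : E} (h : dist y x < ‖x‖) : (0 : E) ∉ segment ℝ x y := by
  intro h0
  have hball : segment ℝ x y ⊆ ball x ‖x‖ :=
    (convex_ball x ‖x‖).segment_subset (mem_ball_self (dist_nonneg.trans_lt h)) h
  simpa using hball h0

lemma zero_notMem_segment_of_forall_ne_smul {E : Type*} [AddCommGroup E] [Module ℝ E] {x v : E}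
    (hx : x ≠ 0) (hv : ∀ l : ℝ, v ≠ l • x) : (0 : E) ∉ segment ℝ x v := by
  rintro ⟨a, b, -, -, hab, h0⟩
  have hb : b ≠ 0 := by
    rintro rfl
    exact hx (by simpa [(add_zero a).symm.trans hab] using h0)
  refine hv (-(b⁻¹ * a)) ?_
  rw [neg_smul, mul_smul, ← smul_neg, eq_inv_smul_iff₀ hb, eq_neg_iff_add_eq_zero, add_comm, h0]

lemma exists_forall_ne_smul_of_contMDiff_circle {E : Type*} [NormedAddCommGroup E]
    [NormedSpace ℝ E] [FiniteDimensional ℝ E] (hE : 2 < Module.finrank ℝ E) {g : Circle → E}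
    (hg : ContMDiff (𝓡 1) 𝓘(ℝ, E) 1 g) : ∃ v : E, ∀ z (l : ℝ), v ≠ l • g z := by
  have hgexp : ContDiff ℝ 1 fun θ : ℝ => g (Circle.exp θ) :=
    (hg.comp contMDiff_circleExp).contDiff
  have hcone : ContDiff ℝ 1 fun p : ℝ × ℝ => p.1 • g (Circle.exp p.2) :=
    contDiff_fst.smul (hgexp.comp contDiff_snd)
  obtain ⟨v, hv⟩ := (hcone.dense_compl_range_of_finrank_lt_finrank (by simpa using hE)).nonempty
  refine ⟨v, fun z l hvz => hv ⟨(l, Complex.arg z), ?_⟩⟩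
  exact (congrArg (fun w => l • g w) (Circle.exp_arg z)).trans hvz.symm

lemma extendsNonvanishing_of_circle {Y E : Type*} [TopologicalSpace Y] [NormalSpace Y]
    [NormedAddCommGroup E] [InnerProductSpace ℝ E] [FiniteDimensional ℝ E]
    (hE : 2 < Module.finrank ℝ E) {e : Circle → Y} (he : IsClosedEmbedding e) {f : Circle → E}
    (hf : Continuous f) (hf0 : ∀ z, f z ≠ 0) : ExtendsNonvanishing e f := by
  obtain ⟨g, happrox, -⟩ := hf.exists_contMDiff_approx (𝓡 1) 1 hf.norm
    fun z => norm_pos_iff.2 (hf0 z)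
  have hg0 : ∀ z, g z ≠ 0 := fun z hz => by simpa [hz] using happrox z
  obtain ⟨v, hv⟩ := exists_forall_ne_smul_of_contMDiff_circle hE g.contMDiff
  have hv0 : v ≠ 0 := by simpa using hv 1 0
  have hconst : ExtendsNonvanishing e fun _ => v :=
    ⟨fun _ => v, continuous_const, fun _ => hv0, fun _ => rfl⟩
  exact (hconst.of_zero_notMem_segment he g.contMDiff.continuous fun z =>
    zero_notMem_segment_of_forall_ne_smul (hg0 z) (hv z)).of_zero_notMem_segment he hf fun z =>
      zero_notMem_segment_of_dist_lt_norm (happrox z)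

theorem isPathConnected_compl_range_of_circle {E : Type*} [NormedAddCommGroup E]
    [InnerProductSpace ℝ E] [FiniteDimensional ℝ E] (hE : 2 < Module.finrank ℝ E)
    {e : Circle → E} (he : Continuous e) (hinj : Function.Injective e) :
    IsPathConnected (range e)ᶜ := by
  have hcompact : IsCompact (range e) := isCompact_range he
  have hrank : 1 < Module.rank ℝ E := by
    rw [← Module.finrank_eq_rank]
    exact_mod_cast one_lt_two.trans hE
  refine isPathConnected_compl_of_not_isBounded hrank hcompact.isBounded fun c hc => ?_
  obtain ⟨F, hF, hF0, hFe⟩ := extendsNonvanishing_of_circle hE (he.isClosedEmbedding hinj)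
    (f := fun z => e z - c) (by fun_prop) fun z hz => hc ⟨z, sub_eq_zero.1 hz⟩
  exact not_isBounded_pathComponentIn_compl hcompact.isClosed hc hF hF0
    (forall_mem_range.2 hFe)

theorem isPathConnected_compl_range_of_periodic {E : Type*} [NormedAddCommGroup E]
    [InnerProductSpace ℝ E] [FiniteDimensional ℝ E] (hE : 2 < Module.finrank ℝ E) {γ : ℝ → E}
    (hcont : Continuous γ) (hper : Function.Periodic γ 1)
    (hinj : ∀ s t : ℝ, γ s = γ t → ∃ n : ℤ, s - t = n) : IsPathConnected (range γ)ᶜ := by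
  let φ := AddCircle.homeomorphCircle (one_ne_zero (α := ℝ))
  have hlift : Continuous hper.lift := continuous_coinduced_dom.2 hcont
  have hlift_inj : Function.Injective hper.lift := by
    intro a b
    induction a using QuotientAddGroup.induction_on with | H s =>
    induction b using QuotientAddGroup.induction_on with | H t =>
    intro hst
    obtain ⟨n, hn⟩ := hinj s t hst
    rw [QuotientAddGroup.eq, AddSubgroup.mem_zmultiples_iff]
    exact ⟨-n, by rw [zsmul_one, Int.cast_neg, ← hn, neg_sub, sub_eq_neg_add]⟩
  have hrange : range (hper.lift ∘ φ.symm) = range γ := by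
    rw [φ.symm.surjective.range_comp, ← QuotientAddGroup.mk_surjective.range_comp]
    rfl
  rw [← hrange]
  exact isPathConnected_compl_range_of_circle hE (hlift.comp φ.symm.continuous)
    (hlift_inj.comp φ.symm.injective)

/-! ### Inversions and reflections -/

lemma ne_smul_of_mem_Icc_inv {E : Type*} [NormedAddCommGroup E] [NormedSpace ℝ E] {v x : E}
    {M μ : ℝ} (hv : ‖v‖ = 1) (hx : ‖x‖ < M) (hμ : μ ∈ Icc 0 M⁻¹) : v ≠ μ • x := by
  rintro rfl
  rw [norm_smul, Real.norm_of_nonneg hμ.1] at hv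
  have hM : 0 < M := (norm_nonneg x).trans_lt hx
  have : μ * ‖x‖ < 1 :=
    calc μ * ‖x‖ ≤ M⁻¹ * ‖x‖ := mul_le_mul_of_nonneg_right hμ.2 (norm_nonneg x)
      _ < 1 := (inv_mul_lt_one₀ hM).2 hx
  exact this.ne hv

section CurvedReflection

variable {E : Type*} [NormedAddCommGroup E] [InnerProductSpace ℝ E]

/-- The inversion in the sphere through `0` with unit normal `v` there and curvature `μ`, that is,
with center `μ⁻¹ • v` and radius `μ⁻¹`, in a form that makes sense at `μ = 0`, where the sphere
becomes the hyperplane orthogonal to `v` and the inversion the reflection in it. -/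
def curvedReflection (v : E) (μ : ℝ) (x : E) : E :=
  (‖v - μ • x‖ ^ 2)⁻¹ • (x - (2 * inner ℝ v x) • v + (μ * ‖x‖ ^ 2) • v)

variable {v : E} {μ : ℝ} {x : E}

lemma curvedReflection_zero (hv : ‖v‖ = 1) (x : E) :
    curvedReflection v 0 x = (ℝ ∙ v)ᗮ.reflection x := by
  rw [Submodule.reflection_orthogonal_apply, Submodule.reflection_singleton_apply]
  simp [curvedReflection, hv, mul_smul, two_smul]

lemma curvedReflection_eq_inversion (hv : ‖v‖ = 1) (hμ : μ ≠ 0) (hx : v ≠ μ • x) :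
    curvedReflection v μ x = EuclideanGeometry.inversion (μ⁻¹ • v) μ⁻¹ x := by
  have hsub : x - μ⁻¹ • v = -(μ⁻¹ • (v - μ • x)) := by
    rw [smul_sub, inv_smul_smul₀ hμ, neg_sub]
  have hD : ‖v - μ • x‖ ^ 2 ≠ 0 := pow_ne_zero 2 (norm_ne_zero_iff.2 (sub_ne_zero.2 hx))
  have hratio : (μ⁻¹ / dist x (μ⁻¹ • v)) ^ 2 = (‖v - μ • x‖ ^ 2)⁻¹ := by
    rw [dist_eq_norm, hsub, norm_neg, norm_smul, div_pow, mul_pow, Real.norm_eq_abs, sq_abs,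
      div_mul_cancel_left₀ (pow_ne_zero 2 (inv_ne_zero hμ))]
  have hnorm : ‖v - μ • x‖ ^ 2 = 1 - 2 * μ * inner ℝ v x + μ ^ 2 * ‖x‖ ^ 2 := by
    rw [norm_sub_sq_real, hv, inner_smul_right, norm_smul, mul_pow, Real.norm_eq_abs, sq_abs]
    ring
  have hcoeff : ‖v - μ • x‖ ^ 2 * μ⁻¹ = μ⁻¹ - 2 * inner ℝ v x + μ * ‖x‖ ^ 2 := by
    rw [hnorm]
    field_simp
  rw [EuclideanGeometry.inversion, hratio, vsub_eq_sub, vadd_eq_add, curvedReflection,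
    inv_smul_eq_iff₀ hD, smul_add, smul_inv_smul₀ hD, smul_smul, hcoeff]
  module

lemma injOn_curvedReflection (hv : ‖v‖ = 1) (μ : ℝ) :
    InjOn (curvedReflection v μ) {x | v ≠ μ • x} := by
  intro x hx y hy hxy
  obtain rfl | hμ := eq_or_ne μ 0
  · rw [curvedReflection_zero hv, curvedReflection_zero hv] at hxy
    exact (ℝ ∙ v)ᗮ.reflection.injective hxy
  · rw [curvedReflection_eq_inversion hv hμ hx, curvedReflection_eq_inversion hv hμ hy] at hxy
    exact EuclideanGeometry.inversion_injective _ (inv_ne_zero hμ) hxy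

lemma continuous_curvedReflection_comp {Y : Type*} [TopologicalSpace Y] {κ : Y → ℝ} {f : Y → E}
    (hκ : Continuous κ) (hf : Continuous f) (hne : ∀ y, v ≠ κ y • f y) :
    Continuous fun y => curvedReflection v (κ y) (f y) := by
  have hdenom : Continuous fun y => (‖v - κ y • f y‖ ^ 2)⁻¹ := by
    refine Continuous.inv₀ (by fun_prop) fun y => ?_
    exact pow_ne_zero 2 (norm_ne_zero_iff.2 (sub_ne_zero.2 (hne y)))
  exact hdenom.smul (by fun_prop)

end CurvedReflection

/-! ### Isotopies of loops -/

lemma Isotopic.trans {γ₀ γ₁ γ₂ : ℝ → E3} (h₀₁ : Isotopic γ₀ γ₁) (h₁₂ : Isotopic γ₁ γ₂) :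
    Isotopic γ₀ γ₂ := by
  obtain ⟨H, hH, hH0, hH1, hloop⟩ := h₀₁
  obtain ⟨K, hK, hK0, hK1, kloop⟩ := h₁₂
  refine ⟨fun t s => if t ≤ 1 / 2 then H (2 * t) s else K (2 * t - 1) s, ?_, ?_, ?_, ?_⟩
  · have hH2 : Continuous fun p : ℝ × ℝ => H (2 * p.1) p.2 :=
      hH.comp (f := fun p : ℝ × ℝ => (2 * p.1, p.2)) (by fun_prop)
    have hK2 : Continuous fun p : ℝ × ℝ => K (2 * p.1 - 1) p.2 :=
      hK.comp (f := fun p : ℝ × ℝ => (2 * p.1 - 1, p.2)) (by fun_prop)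
    refine hH2.if_le hK2 continuous_fst continuous_const fun p hp => ?_
    simp only [hp, mul_one_div_cancel (two_ne_zero (α := ℝ)), sub_self, hH1, hK0]
  · simp [hH0]
  · norm_num [hK1]
  · rintro t ⟨ht0, ht1⟩
    by_cases ht : t ≤ 1 / 2
    · simpa only [ht, if_true] using hloop (2 * t) ⟨by linarith, by linarith⟩
    · simpa only [ht, if_false] using kloop (2 * t - 1) ⟨by linarith, by linarith⟩

lemma isotopic_comp_of_injOn {γ : ℝ → E3} (hper : Function.Periodic γ 1)
    (hinj : ∀ s t : ℝ, γ s = γ t → ∃ n : ℤ, s - t = n) {Φ : unitInterval → E3 → E3}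
    (hΦ : Continuous fun p : unitInterval × ℝ => Φ p.1 (γ p.2))
    (hΦinj : ∀ t, InjOn (Φ t) (range γ)) : Isotopic (Φ 0 ∘ γ) (Φ 1 ∘ γ) := by
  refine ⟨fun t s => Φ (projIcc 0 1 zero_le_one t) (γ s), ?_, ?_, ?_, fun t _ => ⟨?_, ?_⟩⟩
  · exact hΦ.comp (f := fun p : ℝ × ℝ => (projIcc 0 1 zero_le_one p.1, p.2))
      ((continuous_projIcc.comp continuous_fst).prodMk continuous_snd)
  · simp only [projIcc_left]
    rfl
  · simp only [projIcc_right]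
    rfl
  · exact fun s => congrArg _ (hper s)
  · exact fun s s' h => hinj s s' (hΦinj _ (mem_range_self s) (mem_range_self s') h)

lemma isotopic_inversion_of_joinedIn {γ : ℝ → E3} (hper : Function.Periodic γ 1)
    (hinj : ∀ s t : ℝ, γ s = γ t → ∃ n : ℤ, s - t = n) (hcont : Continuous γ) {c d : E3}
    (hcd : JoinedIn (range γ)ᶜ c d) {r R : ℝ} (hr : 0 < r) (hR : 0 < R) :
    Isotopic (EuclideanGeometry.inversion c r ∘ γ) (EuclideanGeometry.inversion d R ∘ γ) := by
  obtain ⟨p, hp⟩ := hcd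
  have hpos : ∀ t : unitInterval, 0 < AffineMap.lineMap r R (t : ℝ) := fun t =>
    (convex_Ioi (0 : ℝ)).lineMap_mem hr hR t.2
  have := isotopic_comp_of_injOn hper hinj
    (Φ := fun t => EuclideanGeometry.inversion (p t) (AffineMap.lineMap r R (t : ℝ)))
    (Continuous.inversion (by fun_prop) (by fun_prop) (by fun_prop)
      fun q hq => hp q.1 ⟨q.2, hq⟩)
    fun t => (EuclideanGeometry.inversion_injective _ (hpos t).ne').injOn
  simpa using this

lemma isotopic_inversion_reflection {γ : ℝ → E3} (hper : Function.Periodic γ 1)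
    (hinj : ∀ s t : ℝ, γ s = γ t → ∃ n : ℤ, s - t = n)
    (hcont : Continuous γ) {v : E3} (hv : ‖v‖ = 1) {M : ℝ} (hM : ∀ s, ‖γ s‖ < M) :
    Isotopic (EuclideanGeometry.inversion (M • v) M ∘ γ) ((ℝ ∙ v)ᗮ.reflection ∘ γ) := by
  have hM0 : 0 < M := (norm_nonneg _).trans_lt (hM 0)
  let κ : unitInterval → ℝ := fun t => unitInterval.symm t * M⁻¹
  have hκ : ∀ t s, v ≠ κ t • γ s := fun t s => by
    refine ne_smul_of_mem_Icc_inv hv (hM s) ⟨?_, ?_⟩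
    · exact mul_nonneg (unitInterval.nonneg _) (inv_pos.2 hM0).le
    · exact mul_le_of_le_one_left (inv_pos.2 hM0).le (unitInterval.le_one _)
  have hiso := isotopic_comp_of_injOn hper hinj (Φ := fun t => curvedReflection v (κ t))
    (continuous_curvedReflection_comp (by fun_prop) (by fun_prop) fun q => hκ q.1 q.2)
    fun t => (injOn_curvedReflection hv (κ t)).mono (range_subset_iff.2 (hκ t))
  have hstart : curvedReflection v (κ 0) ∘ γ = EuclideanGeometry.inversion (M • v) M ∘ γ := by
    funext s
    have hκ0 : κ 0 = M⁻¹ := by simp [κ]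
    have := curvedReflection_eq_inversion hv (inv_ne_zero hM0.ne') (hκ0 ▸ hκ 0 s)
    rwa [inv_inv, ← hκ0] at this
  have hend : curvedReflection v (κ 1) ∘ γ = (ℝ ∙ v)ᗮ.reflection ∘ γ := by
    funext s
    have hκ1 : κ 1 = 0 := by simp [κ]
    simp only [Function.comp_apply, hκ1, curvedReflection_zero hv]
  rwa [hstart, hend] at hiso

lemma inv3_eq_inversion (c : E3) (r : ℝ) : inv3 c r = EuclideanGeometry.inversion c r := by
  funext x
  simp [inv3, EuclideanGeometry.inversion, dist_eq_norm, div_pow, add_comm]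

lemma reflect3_eq_reflection :
    reflect3 = (ℝ ∙ (EuclideanSpace.single 2 1 : E3))ᗮ.reflection := by
  funext x
  simp [reflect3, Submodule.reflection_orthogonal_apply, Submodule.reflection_singleton_apply,
    EuclideanSpace.inner_single_left, mul_smul, two_smul]

/-- Inverting a knot in a sphere whose center is off the knot yields a knot isotopic to
the mirror image of the original knot: `I_{c,r} ∘ γ` is isotopic to `ρ ∘ γ`. -/
theorem inversion_isotopic_to_mirror (γ : ℝ → E3)
    (hcont : Continuous γ)
    (hper : Function.Periodic γ 1)
    (hinj : ∀ s t : ℝ, γ s = γ t → ∃ n : ℤ, s - t = n)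
    (c : E3) (hc : c ∉ Set.range γ) (r : ℝ) (hr : 0 < r) :
    Isotopic (inv3 c r ∘ γ) (reflect3 ∘ γ) := by
  have hbdd : Bornology.IsBounded (range γ) :=
    (hper.compact_of_continuous one_ne_zero hcont).isBounded
  obtain ⟨M, hM0, hM⟩ := hbdd.exists_pos_norm_lt
  rw [forall_mem_range] at hM
  let e : E3 := EuclideanSpace.single 2 1
  have he : ‖e‖ = 1 := by simp [e]
  have hMe : M • e ∉ range γ := by
    rintro ⟨s, hs⟩
    simpa [hs, norm_smul, he, abs_of_pos hM0] using hM s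
  have hjoin : JoinedIn (range γ)ᶜ c (M • e) :=
    (isPathConnected_compl_range_of_periodic (by simp) hcont hper hinj).joinedIn c hc _ hMe
  rw [inv3_eq_inversion, reflect3_eq_reflection]
  exact (isotopic_inversion_of_joinedIn hper hinj hcont hjoin hr hM0).trans
    (isotopic_inversion_reflection hper hinj hcont he hM)
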